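/- Let d ≥ 1, let z_1, …, z_n ∈ 𝔹_d and w_1, …, w_n ∈ ℂ. If there exists an analytic function φ : 𝔹_d → ℂ with |φ(z)| ≤ 1 for all z ∈ 𝔹_d and φ(z_i) = w_i for i = 1,…,n, then the n×n matrix with (i,j) entry (1 − w_i w̄_j) · (1 − ⟨z_i, z_j⟩)^{-d} is positive semidefinite, where ⟨z, w⟩ = Σ_{k=1}^d z_k w̄_k. -/

import Mathlib

open Complex ComplexConjugate
open scoped ComplexOrder

/-- The open unit ball `𝔹_d` of `ℂ^d` (for the Hermitian norm `‖z‖² = Σ_k |z_k|²`). -/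
def EucBall (d : ℕ) : Set (Fin d → ℂ) := {z | ∑ k, ‖z k‖ ^ 2 < 1}

/-!
If `φ` is analytic on the closed ball and bounded by `1`, multiplication by `φ` is a contraction of
`L²` of the sphere. The Szegő kernels `k_w = k(·, w)` reproduce analytic functions,
`⟪k_w, f⟫ = f w`, so `⟪k_w, φ f⟫ = φ w * ⟪k_w, f⟫`: compressed to the span of the kernels at the
nodes, the adjoint of multiplication by `φ` has the `k_w` as eigenvectors, with eigenvalues
`conj (φ w)`. That this compression is a contraction is the positivity of the Pick matrix. A general
`φ` is the limit of its dilations `φ (r • ·)` as `r → 1`.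

For the reproducing formula let `w = a • e` with `‖e‖ = 1`. Expanding `k` in powers of `⟪x, w⟫`, one
has to integrate `f x * ⟪x, e⟫ ^ m` over the sphere. Averaging over the unitary maps that fix `e`
and rotate its orthogonal complement replaces `f x` by `f (⟪e, x⟫ • e)`; averaging over scalar
rotations then extracts the `m`-th Taylor coefficient of `b ↦ f (b • e)`, times the moment of
`‖⟪e, x⟫‖ ^ (2 * m)`, which is computed by integrating against a Gaussian.
-/

open MeasureTheory Metric Module Set Filter Topology
open Real (circleAverage)

section HilbertSpace

variable {𝕜 H ι : Type*} [RCLike 𝕜] [SeminormedAddCommGroup H] [InnerProductSpace 𝕜 H] [Fintype ι]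

theorem sum_mul_mul_inner_eq_norm_sq (a : ι → 𝕜) (u : ι → H) :
    ∑ i, ∑ j, a i * conj (a j) * inner 𝕜 (u i) (u j) =
      ((‖∑ i, conj (a i) • u i‖ ^ 2 : ℝ) : 𝕜) := by
  rw [RCLike.ofReal_pow, ← inner_self_eq_norm_sq_to_K, sum_inner]
  refine Finset.sum_congr rfl fun i _ ↦ ?_
  rw [inner_sum]
  refine Finset.sum_congr rfl fun j _ ↦ ?_
  rw [inner_smul_left, inner_smul_right, RCLike.conj_conj, mul_assoc]

/- With `f = ∑ conj (c i) • u i` and `g = ∑ conj (w i * c i) • u i`, the sum is `‖f‖² - ‖g‖²`.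
If `T` is the contraction `u i ↦ v i`, then `‖g‖² = ⟪f, T g⟫ ≤ ‖f‖ ‖g‖`. -/
theorem sum_one_sub_mul_inner_nonneg {u v : ι → H} {w : ι → 𝕜}
    (hcontr : ∀ a : ι → 𝕜, ‖∑ i, a i • v i‖ ≤ ‖∑ i, a i • u i‖)
    (hinner : ∀ i j, inner 𝕜 (u i) (v j) = w i * inner 𝕜 (u i) (u j)) (c : ι → 𝕜) :
    0 ≤ ∑ i, ∑ j, (1 - w i * conj (w j)) * inner 𝕜 (u i) (u j) * c i * conj (c j) := by
  set f := ∑ i, conj (c i) • u i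
  set g := ∑ i, conj (w i * c i) • u i
  have norm_g_sq : inner 𝕜 f (∑ j, conj (w j * c j) • v j) = ((‖g‖ ^ 2 : ℝ) : 𝕜) := by
    rw [← sum_mul_mul_inner_eq_norm_sq, sum_inner]
    refine Finset.sum_congr rfl fun i _ ↦ ?_
    rw [inner_sum]
    refine Finset.sum_congr rfl fun j _ ↦ ?_
    rw [inner_smul_left, inner_smul_right, RCLike.conj_conj, hinner]
    ring
  have norm_g_sq_le : ‖g‖ ^ 2 ≤ ‖f‖ * ‖g‖ := calc
    ‖g‖ ^ 2 = ‖inner 𝕜 f (∑ j, conj (w j * c j) • v j)‖ := by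
      rw [norm_g_sq, RCLike.norm_ofReal, abs_of_nonneg (sq_nonneg _)]
    _ ≤ ‖f‖ * ‖∑ j, conj (w j * c j) • v j‖ := norm_inner_le_norm _ _
    _ ≤ ‖f‖ * ‖g‖ := by gcongr; exact hcontr _
  have norm_g_sq_le_norm_f_sq : ‖g‖ ^ 2 ≤ ‖f‖ ^ 2 := by
    nlinarith [sq_nonneg (‖f‖ - ‖g‖)]
  calc (0 : 𝕜) ≤ ((‖f‖ ^ 2 - ‖g‖ ^ 2 : ℝ) : 𝕜) := by
        exact_mod_cast sub_nonneg.2 norm_g_sq_le_norm_f_sq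
    _ = _ := by
      rw [RCLike.ofReal_sub, ← sum_mul_mul_inner_eq_norm_sq, ← sum_mul_mul_inner_eq_norm_sq,
        ← Finset.sum_sub_distrib]
      refine Finset.sum_congr rfl fun i _ ↦ ?_
      rw [← Finset.sum_sub_distrib]
      refine Finset.sum_congr rfl fun j _ ↦ ?_
      rw [map_mul]
      ring

end HilbertSpace

section SphereMeasure

variable {E F : Type*} [NormedAddCommGroup E] [NormedSpace ℝ E] [MeasurableSpace E]

/-- The surface measure on the unit sphere induced by `μ`, normalized to total mass one. For an
additive Haar measure `μ` on a finite-dimensional space it does not depend on `μ`. -/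
noncomputable def sphereMeasure (μ : Measure E) : Measure (sphere (0 : E) 1) :=
  (μ.toSphere univ)⁻¹ • μ.toSphere

variable [BorelSpace E] [FiniteDimensional ℝ E] [NormedAddCommGroup F] [NormedSpace ℝ F]
  (μ : Measure E) [μ.IsAddHaarMeasure]

theorem measurePreserving_isometryEquiv (f : E ≃ᵢ E) : MeasurePreserving f μ μ := by
  rw [Measure.isAddLeftInvariant_eq_smul μ (Measure.hausdorffMeasure (finrank ℝ E))]
  exact (f.measurePreserving_hausdorffMeasure _).smul_measure _

variable [Nontrivial E]

instance : IsProbabilityMeasure (sphereMeasure μ) :=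
  have : NeZero μ.toSphere := ⟨μ.toSphere_ne_zero⟩
  isProbabilityMeasureSMul

theorem integral_eq_integral_volumeIoiPow_smul_integral_toSphere {f g : E → F} {h : ℝ → ℝ}
    (hf : ∀ r > 0, ∀ x ∈ sphere (0 : E) 1, f (r • x) = h r • g x) :
    ∫ x, f x ∂μ = (∫ r : Ioi (0 : ℝ), h r ∂.volumeIoiPow (finrank ℝ E - 1)) •
      ∫ x : sphere (0 : E) 1, g x ∂μ.toSphere := calc
  ∫ x, f x ∂μ = ∫ x : ({(0)}ᶜ : Set E), f x ∂(μ.comap (↑)) := by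
    rw [integral_subtype_comap (measurableSet_singleton _).compl, restrict_compl_singleton]
  _ = ∫ x : ({(0)}ᶜ : Set E), h (homeomorphUnitSphereProd E x).2 •
      g (homeomorphUnitSphereProd E x).1 ∂(μ.comap (↑)) := by
    congr with x
    have hx : 0 < ‖(x : E)‖ := norm_pos_iff.2 x.2
    rw [homeomorphUnitSphereProd_apply_snd_coe, ← hf _ hx _ (homeomorphUnitSphereProd E x).1.2,
      homeomorphUnitSphereProd_apply_fst_coe, smul_inv_smul₀ hx.ne']
  _ = ∫ p, h p.2 • g p.1 ∂μ.toSphere.prod (.volumeIoiPow (finrank ℝ E - 1)) :=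
    μ.measurePreserving_homeomorphUnitSphereProd.integral_comp
      (Homeomorph.measurableEmbedding _) fun p ↦ h p.2 • g p.1
  _ = _ := by
    rw [← integral_prod_swap]
    exact integral_prod_smul (fun r : Ioi (0 : ℝ) ↦ h r) (fun x : sphere (0 : E) 1 ↦ g x)

theorem integral_eq_integral_norm_smul_integral_sphereMeasure {f g : E → F} {h : ℝ → ℝ}
    (hf : ∀ r > 0, ∀ x ∈ sphere (0 : E) 1, f (r • x) = h r • g x) :
    ∫ x, f x ∂μ = (∫ x, h ‖x‖ ∂μ) • ∫ x : sphere (0 : E) 1, g x ∂sphereMeasure μ := by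
  have : NeZero μ.toSphere := ⟨μ.toSphere_ne_zero⟩
  have toSphere_univ_ne_zero : μ.toSphere.real univ ≠ 0 := measureReal_univ_pos.ne'
  have integral_h : ∫ x, h ‖x‖ ∂μ =
      (∫ r : Ioi (0 : ℝ), h r ∂.volumeIoiPow (finrank ℝ E - 1)) * μ.toSphere.real univ := by
    rw [integral_eq_integral_volumeIoiPow_smul_integral_toSphere μ (g := 1) (h := h)]
    · simp
    · intro r hr x hx
      simp [norm_smul, mem_sphere_zero_iff_norm.1 hx, abs_of_pos hr]
  rw [integral_eq_integral_volumeIoiPow_smul_integral_toSphere μ hf, integral_h, sphereMeasure,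
    integral_smul_measure, smul_smul, ENNReal.toReal_inv, ← measureReal_def,
    mul_inv_cancel_right₀ toSphere_univ_ne_zero]

theorem integral_sphereMeasure_comp_linearIsometry (f : E →ₗᵢ[ℝ] E) (g : E → F) :
    ∫ x : sphere (0 : E) 1, g (f x) ∂sphereMeasure μ =
      ∫ x : sphere (0 : E) 1, g x ∂sphereMeasure μ := by
  let h : ℝ → ℝ := indicator (Iio 1) 1
  have integral_h : ∫ x, h ‖x‖ ∂μ ≠ 0 := by
    have : (fun x : E ↦ h ‖x‖) = indicator (ball 0 1) 1 := by
      classical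
      ext x
      simp only [h, indicator_apply, mem_ball_zero_iff, mem_Iio, Pi.one_apply]
    rw [this, integral_indicator_one measurableSet_ball]
    exact (ENNReal.toReal_pos (measure_ball_pos μ 0 one_pos).ne' measure_ball_lt_top.ne).ne'
  have polar (g : E → F) : ∫ x, h ‖x‖ • g (‖x‖⁻¹ • x) ∂μ =
      (∫ x, h ‖x‖ ∂μ) • ∫ x : sphere (0 : E) 1, g x ∂sphereMeasure μ := by
    refine integral_eq_integral_norm_smul_integral_sphereMeasure μ fun r hr x hx ↦ ?_
    rw [norm_smul, mem_sphere_zero_iff_norm.1 hx, mul_one, Real.norm_of_nonneg hr.le,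
      inv_smul_smul₀ hr.ne']
  let e : E ≃ᵢ E := (f.toLinearIsometryEquiv rfl).toIsometryEquiv
  refine smul_right_injective F integral_h ?_
  calc (∫ x, h ‖x‖ ∂μ) • ∫ x : sphere (0 : E) 1, g (f x) ∂sphereMeasure μ
    _ = ∫ x, h ‖x‖ • g (f (‖x‖⁻¹ • x)) ∂μ := (polar (g ∘ f)).symm
    _ = ∫ x, h ‖e x‖ • g (‖e x‖⁻¹ • e x) ∂μ := by simp [e]
    _ = ∫ x, h ‖x‖ • g (‖x‖⁻¹ • x) ∂μ :=
      (measurePreserving_isometryEquiv μ e).integral_comp e.toHomeomorph.measurableEmbedding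
        fun x ↦ h ‖x‖ • g (‖x‖⁻¹ • x)
    _ = (∫ x, h ‖x‖ ∂μ) • ∫ x : sphere (0 : E) 1, g x ∂sphereMeasure μ := polar g

end SphereMeasure

section CircleAverage

theorem integral_circleAverage_comm {X F : Type*} [TopologicalSpace X] [CompactSpace X] [T2Space X]
    [MeasurableSpace X] [BorelSpace X] [NormedAddCommGroup F] [NormedSpace ℝ F]
    (ν : Measure X) [IsFiniteMeasure ν] {c : ℂ} {R : ℝ} {f : ℂ → X → F}
    (hf : Continuous fun p : X × ℝ ↦ f (circleMap c R p.2) p.1) :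
    ∫ x, circleAverage (f · x) c R ∂ν = circleAverage (fun a ↦ ∫ x, f a x ∂ν) c R := by
  have integrable : Integrable (fun p : ℝ × X ↦ f (circleMap c R p.1) p.2)
      ((volume.restrict (uIoc 0 (2 * Real.pi))).prod ν) := by
    rw [← Measure.restrict_univ (μ := ν), Measure.prod_restrict]
    exact ((hf.comp continuous_swap).continuousOn.integrableOn_compact
      (isCompact_uIcc.prod isCompact_univ)).mono_set (prod_mono uIoc_subset_uIcc subset_rfl)
  simp only [Real.circleAverage_def]
  rw [integral_smul, intervalIntegral_integral_swap integrable]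

theorem circleAverage_conj_pow_mul_comp_mul {f : ℂ → ℂ}
    (hf : DifferentiableOn ℂ f (closedBall 0 1)) {a : ℂ} (ha : ‖a‖ ≤ 1) (m : ℕ) :
    circleAverage (fun b ↦ conj b ^ m * f (a * b)) 0 1 =
      a ^ m * (iteratedDeriv m f 0 / m.factorial) := by
  have norm_mul_le (b : ℂ) : ‖a * b‖ ≤ ‖b‖ := by
    rw [norm_mul]
    exact mul_le_of_le_one_left (norm_nonneg b) ha
  have mapsTo_closedBall : MapsTo (a * ·) (closedBall 0 1) (closedBall 0 1) := fun b hb ↦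
    mem_closedBall_zero_iff.2 ((norm_mul_le b).trans (mem_closedBall_zero_iff.1 hb))
  have mapsTo_ball : MapsTo (a * ·) (ball 0 1) (ball 0 1) := fun b hb ↦
    mem_ball_zero_iff.2 ((norm_mul_le b).trans_lt (mem_ball_zero_iff.1 hb))
  have differentiableOn : DifferentiableOn ℂ (fun b ↦ f (a * b)) (closedBall 0 1) :=
    hf.comp (by fun_prop) mapsTo_closedBall
  have iteratedDeriv_comp :
      iteratedDeriv m (fun b ↦ f (a * b)) 0 = a ^ m * iteratedDeriv m f 0 := by
    have zero_mem : (0 : ℂ) ∈ ball 0 1 := mem_ball_self one_pos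
    have contDiffOn : ContDiffOn ℂ m f (ball 0 1) :=
      (hf.mono ball_subset_closedBall).contDiffOn isOpen_ball
    simpa [iteratedDerivWithin_of_isOpen isOpen_ball zero_mem] using
      iteratedDerivWithin_comp_const_smul zero_mem isOpen_ball.uniqueDiffOn contDiffOn a mapsTo_ball
  have cauchy := differentiableOn.circleIntegral_one_div_sub_center_pow_smul one_pos m
  rw [Real.circleAverage_eq_circleIntegral one_ne_zero,
    circleIntegral.integral_congr (g := fun b ↦ (1 / (b - 0) ^ (m + 1)) • f (a * b)) zero_le_one,
    cauchy, iteratedDeriv_comp]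
  · simp only [smul_eq_mul]
    field_simp
  · intro b hb
    simp only [smul_eq_mul, sub_zero, pow_succ, one_div, mul_inv,
      ← inv_eq_conj (mem_sphere_zero_iff_norm.1 hb), inv_pow]
    ring

theorem circleAverage_comp_mul_mul_conj_pow {f : ℂ → ℂ}
    (hf : DifferentiableOn ℂ f (closedBall 0 1)) {a : ℂ} (ha : ‖a‖ ≤ 1) (m : ℕ) :
    circleAverage (fun b ↦ f (a * b) * conj (a * b) ^ m) 0 1 =
      iteratedDeriv m f 0 / m.factorial * (‖a‖ ^ (2 * m) : ℝ) := calc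
  circleAverage (fun b ↦ f (a * b) * conj (a * b) ^ m) 0 1 =
      conj a ^ m * circleAverage (fun b ↦ conj b ^ m * f (a * b)) 0 1 := by
    rw [← smul_eq_mul, ← Real.circleAverage_fun_smul]
    congr 1
    ext b
    rw [smul_eq_mul, map_mul]
    ring
  _ = _ := by
    rw [circleAverage_conj_pow_mul_comp_mul hf ha, pow_mul, ← Complex.normSq_eq_norm_sq,
      ofReal_pow, ← Complex.mul_conj]
    ring

end CircleAverage

section Projection

variable {𝕜 E : Type*} [RCLike 𝕜] [NormedAddCommGroup E] [InnerProductSpace 𝕜 E]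
  (K : Submodule 𝕜 E) [K.HasOrthogonalProjection]

theorem norm_sq_starProjection_add_smul_starProjection (b : 𝕜) (x : E) :
    ‖K.starProjection x + b • Kᗮ.starProjection x‖ ^ 2 =
      ‖K.starProjection x‖ ^ 2 + ‖b‖ ^ 2 * ‖Kᗮ.starProjection x‖ ^ 2 := by
  have h : inner 𝕜 (K.starProjection x) (b • Kᗮ.starProjection x) = 0 := by
    rw [inner_smul_right, Submodule.inner_right_of_mem_orthogonal
      (Submodule.starProjection_apply_mem K x) (Submodule.starProjection_apply_mem Kᗮ x), mul_zero]
  rw [sq, norm_add_sq_eq_norm_sq_add_norm_sq_of_inner_eq_zero _ _ h, norm_smul]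
  ring

theorem norm_starProjection_add_smul_starProjection_le {b : 𝕜} (hb : ‖b‖ ≤ 1) (x : E) :
    ‖K.starProjection x + b • Kᗮ.starProjection x‖ ≤ ‖x‖ := by
  rw [← sq_le_sq₀ (norm_nonneg _) (norm_nonneg _),
    norm_sq_starProjection_add_smul_starProjection, K.norm_sq_eq_add_norm_sq_starProjection x]
  gcongr
  exact mul_le_of_le_one_left (sq_nonneg _) (pow_le_one₀ (norm_nonneg b) hb)

theorem norm_starProjection_add_smul_starProjection {b : 𝕜} (hb : ‖b‖ = 1) (x : E) :
    ‖K.starProjection x + b • Kᗮ.starProjection x‖ = ‖x‖ := by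
  rw [← sq_eq_sq₀ (norm_nonneg _) (norm_nonneg _),
    norm_sq_starProjection_add_smul_starProjection, hb, one_pow, one_mul,
    ← Submodule.norm_sq_eq_add_norm_sq_starProjection]

end Projection

section ComplexSphere

variable {E F : Type*} [NormedAddCommGroup E] [InnerProductSpace ℂ E] [FiniteDimensional ℂ E]
  [Nontrivial E] [MeasurableSpace E] [BorelSpace E] [NormedAddCommGroup F] [NormedSpace ℝ F]
  [CompleteSpace F] (μ : Measure E) [μ.IsAddHaarMeasure]

theorem integral_sphereMeasure_eq_integral_circleAverage (K : Submodule ℂ E) {G : E → F}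
    (hG : ContinuousOn G (sphere 0 1)) :
    ∫ x : sphere (0 : E) 1, G x ∂sphereMeasure μ =
      ∫ x : sphere (0 : E) 1, circleAverage
        (fun b ↦ G (K.starProjection x + b • Kᗮ.starProjection x)) 0 1 ∂sphereMeasure μ := by
  have : FiniteDimensional ℝ E := .complexToReal E
  let T (b : ℂ) : E →L[ℂ] E := K.starProjection + b • Kᗮ.starProjection
  have norm_T {b : ℂ} (hb : ‖b‖ = 1) (x : E) : ‖T b x‖ = ‖x‖ :=
    norm_starProjection_add_smul_starProjection K hb x
  have invariant (b : ℂ) (hb : b ∈ sphere (0 : ℂ) |1|) :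
      ∫ x : sphere (0 : E) 1, G (T b x) ∂sphereMeasure μ =
        ∫ x : sphere (0 : E) 1, G x ∂sphereMeasure μ := by
    have hb : ‖b‖ = 1 := by simpa using hb
    exact integral_sphereMeasure_comp_linearIsometry μ
      ⟨(T b).toLinearMap.restrictScalars ℝ, norm_T hb⟩ G
  have continuous : Continuous fun p : sphere (0 : E) 1 × ℝ ↦ G (T (circleMap 0 1 p.2) p.1) := by
    refine hG.comp_continuous (by fun_prop) fun p ↦ ?_
    rw [mem_sphere_zero_iff_norm, norm_T (by simp), norm_eq_of_mem_sphere]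
  calc ∫ x : sphere (0 : E) 1, G x ∂sphereMeasure μ
    _ = circleAverage (fun b ↦ ∫ x : sphere (0 : E) 1, G (T b x) ∂sphereMeasure μ) 0 1 :=
      (Real.circleAverage_const_on_circle invariant).symm
    _ = ∫ x : sphere (0 : E) 1, circleAverage (fun b ↦ G (T b x)) 0 1 ∂sphereMeasure μ :=
      (integral_circleAverage_comm (sphereMeasure μ) (f := fun b x ↦ G (T b x)) continuous).symm

theorem integral_sphereMeasure_mul_comp_starProjection (K : Submodule ℂ E) {f g : E → ℂ}
    (hf : DifferentiableOn ℂ f (closedBall 0 1)) (hg : Continuous g) :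
    ∫ x : sphere (0 : E) 1, f x * g (K.starProjection x) ∂sphereMeasure μ =
      ∫ x : sphere (0 : E) 1, f (K.starProjection x) * g (K.starProjection x)
        ∂sphereMeasure μ := by
  have proj_apply (b : ℂ) (x : E) :
      K.starProjection (K.starProjection x + b • Kᗮ.starProjection x) = K.starProjection x := by
    rw [map_add, map_smul, K.starProjection_apply_eq_zero_iff.2 (Kᗮ.starProjection_apply_mem x),
      smul_zero, add_zero, K.starProjection_eq_self_iff.2 (K.starProjection_apply_mem x)]
  have continuousOn : ContinuousOn (fun x ↦ f x * g (K.starProjection x)) (sphere 0 1) :=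
    (hf.continuousOn.mono sphere_subset_closedBall).mul (by fun_prop)
  rw [integral_sphereMeasure_eq_integral_circleAverage μ K continuousOn]
  congr with x
  have differentiableOn : DifferentiableOn ℂ
      (fun b : ℂ ↦ f (K.starProjection x + b • Kᗮ.starProjection x)) (closedBall 0 1) := by
    refine hf.comp (by fun_prop) fun b hb ↦ ?_
    rw [mem_closedBall_zero_iff] at hb ⊢
    exact (norm_starProjection_add_smul_starProjection_le K hb x).trans_eq
      (norm_eq_of_mem_sphere x)
  simp only [proj_apply]
  have diffContOnCl : DiffContOnCl ℂ (fun b : ℂ ↦ f (K.starProjection x +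
      b • Kᗮ.starProjection x) * g (K.starProjection x)) (ball 0 |1|) := by
    rw [abs_one]
    exact ((differentiableOn.mul_const _).mono closure_ball_subset_closedBall).diffContOnCl
  simpa using diffContOnCl.circleAverage

theorem integral_sphereMeasure_mul_inner_pow {e : E} (he : ‖e‖ = 1) {f : E → ℂ}
    (hf : DifferentiableOn ℂ f (closedBall 0 1)) (m : ℕ) :
    ∫ x : sphere (0 : E) 1, f x * inner ℂ (x : E) e ^ m ∂sphereMeasure μ =
      (iteratedDeriv m (fun a : ℂ ↦ f (a • e)) 0 / m.factorial) *
        ∫ x : sphere (0 : E) 1, (‖inner ℂ e (x : E)‖ ^ (2 * m) : ℝ) ∂sphereMeasure μ := by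
  have slice_differentiableOn : DifferentiableOn ℂ (fun a : ℂ ↦ f (a • e)) (closedBall 0 1) :=
    hf.comp (by fun_prop) fun a ha ↦ by simpa [norm_smul, he] using ha
  have norm_inner_le {x : E} (hx : x ∈ sphere 0 1) : ‖inner ℂ e x‖ ≤ 1 := by
    simpa [he, mem_sphere_zero_iff_norm.1 hx] using norm_inner_le_norm (𝕜 := ℂ) e x
  have continuousOn : ContinuousOn
      (fun x ↦ f (inner ℂ e x • e) * conj (inner ℂ e x) ^ m) (sphere 0 1) := by
    refine .mul (slice_differentiableOn.continuousOn.comp (f := fun x ↦ inner ℂ e x)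
      (by fun_prop) fun x hx ↦ ?_) (by fun_prop)
    exact mem_closedBall_zero_iff.2 (norm_inner_le hx)
  calc ∫ x : sphere (0 : E) 1, f x * inner ℂ (x : E) e ^ m ∂sphereMeasure μ
    _ = ∫ x : sphere (0 : E) 1, f (inner ℂ e (x : E) • e) * conj (inner ℂ e (x : E)) ^ m
          ∂sphereMeasure μ := by
      have := integral_sphereMeasure_mul_comp_starProjection μ (ℂ ∙ e) hf
        (g := fun x ↦ inner ℂ x e ^ m) (by fun_prop)
      simpa [Submodule.starProjection_unit_singleton ℂ he, inner_smul_left, he] using this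
    _ = ∫ x : sphere (0 : E) 1, circleAverage (fun b ↦ f ((inner ℂ e (x : E) * b) • e) *
          conj (inner ℂ e (x : E) * b) ^ m) 0 1 ∂sphereMeasure μ := by
      rw [integral_sphereMeasure_eq_integral_circleAverage μ ⊥ continuousOn]
      simp only [Submodule.starProjection_orthogonal_val, Submodule.starProjection_bot,
        zero_apply, sub_zero, zero_add, inner_smul_right, mul_comm]
    _ = ∫ x : sphere (0 : E) 1, (iteratedDeriv m (fun a : ℂ ↦ f (a • e)) 0 / m.factorial) *
          (‖inner ℂ e (x : E)‖ ^ (2 * m) : ℝ) ∂sphereMeasure μ := by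
      congr with x
      exact circleAverage_comp_mul_mul_conj_pow slice_differentiableOn (norm_inner_le x.2) m
    _ = _ := by rw [integral_const_mul, integral_complex_ofReal]

end ComplexSphere

section GaussianMoments

theorem integral_pow_mul_exp_neg_sq_Ioi (k : ℕ) :
    ∫ r in Ioi (0 : ℝ), r ^ (2 * k + 1) * Real.exp (-r ^ 2) = k.factorial / 2 := by
  have h := integral_rpow_mul_exp_neg_rpow two_pos (q := (2 * k + 1 : ℕ))
    (by linarith [(Nat.cast_nonneg (2 * k + 1) : (0 : ℝ) ≤ (2 * k + 1 : ℕ))])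
  have gamma_argument : (((2 * k + 1 : ℕ) : ℝ) + 1) / 2 = k + 1 := by
    push_cast
    ring
  simp only [Real.rpow_natCast, Real.rpow_two] at h
  rw [h, gamma_argument, Real.Gamma_nat_eq_factorial]
  ring

variable {E : Type*} [NormedAddCommGroup E] [InnerProductSpace ℂ E] [FiniteDimensional ℂ E]
  [MeasurableSpace E] [BorelSpace E] (μ : Measure E) [μ.IsAddHaarMeasure]

theorem integral_norm_pow_mul_exp_neg_norm_sq_eq_factorial_mul [Nontrivial E] (m : ℕ) :
    ∫ x, ‖x‖ ^ (2 * m) * Real.exp (-‖x‖ ^ 2) ∂μ =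
      (finrank ℂ E - 1 + m).factorial * (finrank ℂ E * μ.real (ball 0 1)) := by
  have : FiniteDimensional ℝ E := .complexToReal E
  have exponent : finrank ℝ E - 1 + 2 * m = 2 * (finrank ℂ E - 1 + m) + 1 := by
    have : 0 < finrank ℂ E := finrank_pos
    rw [finrank_real_of_complex]
    lia
  have radial : ∫ r in Ioi (0 : ℝ), r ^ (finrank ℝ E - 1) * (r ^ (2 * m) * Real.exp (-r ^ 2)) =
      (finrank ℂ E - 1 + m).factorial / 2 := by
    simp only [← integral_pow_mul_exp_neg_sq_Ioi, ← exponent, pow_add, mul_assoc]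
  rw [integral_fun_norm_addHaar μ fun r ↦ r ^ (2 * m) * Real.exp (-r ^ 2)]
  simp only [smul_eq_mul, nsmul_eq_mul, radial]
  rw [finrank_real_of_complex]
  push_cast
  ring

theorem integral_norm_pow_mul_exp_neg_norm_sq (m : ℕ) :
    ∫ x, ‖x‖ ^ (2 * m) * Real.exp (-‖x‖ ^ 2) ∂μ =
      (finrank ℂ E).ascFactorial m * ∫ x, Real.exp (-‖x‖ ^ 2) ∂μ := by
  rcases subsingleton_or_nontrivial E with hE | hE
  · cases m <;> simp [Subsingleton.elim _ (0 : E), finrank_zero_of_subsingleton,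
      Nat.zero_ascFactorial]
  have integral_exp := integral_norm_pow_mul_exp_neg_norm_sq_eq_factorial_mul μ 0
  simp only [mul_zero, pow_zero, one_mul, add_zero] at integral_exp
  rw [integral_exp, integral_norm_pow_mul_exp_neg_norm_sq_eq_factorial_mul,
    ← Nat.factorial_mul_ascFactorial, Nat.sub_add_cancel finrank_pos]
  push_cast
  ring

theorem integral_exp_neg_norm_sq_pos [Nontrivial E] : 0 < ∫ x, Real.exp (-‖x‖ ^ 2) ∂μ := by
  have : ProperSpace E := FiniteDimensional.proper ℂ E
  have integral_exp := integral_norm_pow_mul_exp_neg_norm_sq_eq_factorial_mul μ 0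
  simp only [mul_zero, pow_zero, one_mul] at integral_exp
  have finrank_pos : 0 < finrank ℂ E := finrank_pos
  have ball_pos : 0 < μ.real (ball 0 1) :=
    ENNReal.toReal_pos (measure_ball_pos μ 0 one_pos).ne' measure_ball_lt_top.ne
  rw [integral_exp]
  positivity

theorem exists_integral_eq_mul_integral_prod_orthogonal (K : Submodule ℂ E) (ν : Measure K)
    [ν.IsAddHaarMeasure] (ν' : Measure Kᗮ) [ν'.IsAddHaarMeasure] :
    ∃ C : ℝ, ∀ f : E → ℝ, ∫ x, f x ∂μ = C * ∫ p, f (p.1 + p.2) ∂ν.prod ν' := by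
  let e : (K × Kᗮ) ≃L[ℂ] E :=
    (K.prodEquivOfIsCompl Kᗮ K.isCompl_orthogonal).toContinuousLinearEquiv
  have : ((ν.prod ν').map e).IsAddHaarMeasure := e.isAddHaarMeasure_map _
  refine ⟨μ.addHaarScalarFactor ((ν.prod ν').map e), fun f ↦ ?_⟩
  have integral_map : ∫ x, f x ∂(ν.prod ν').map e = ∫ p, f (p.1 + p.2) ∂ν.prod ν' :=
    e.toHomeomorph.measurableEmbedding.integral_map f
  calc ∫ x, f x ∂μ
    _ = ∫ x, f x ∂(μ.addHaarScalarFactor ((ν.prod ν').map e) • (ν.prod ν').map e) := by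
      rw [← Measure.isAddLeftInvariant_eq_smul]
    _ = _ := by
      rw [integral_smul_nnreal_measure, integral_map]
      rfl

theorem integral_norm_starProjection_pow_mul_exp_neg_norm_sq (K : Submodule ℂ E) (m : ℕ) :
    ∫ x, ‖K.starProjection x‖ ^ (2 * m) * Real.exp (-‖x‖ ^ 2) ∂μ =
      (finrank ℂ K).ascFactorial m * ∫ x, Real.exp (-‖x‖ ^ 2) ∂μ := by
  obtain ⟨C, hC⟩ := exists_integral_eq_mul_integral_prod_orthogonal μ K .addHaar .addHaar
  have norm_sq (p : K × Kᗮ) : ‖(p.1 + p.2 : E)‖ ^ 2 = ‖p.1‖ ^ 2 + ‖p.2‖ ^ 2 := by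
    have := norm_add_sq_eq_norm_sq_add_norm_sq_of_inner_eq_zero (p.1 : E) p.2
      (Submodule.inner_right_of_mem_orthogonal p.1.2 p.2.2)
    simpa only [sq, Submodule.coe_norm] using this
  have proj (p : K × Kᗮ) : K.starProjection (p.1 + p.2 : E) = p.1 := by
    rw [map_add, K.starProjection_apply_eq_zero_iff.2 p.2.2, add_zero,
      K.starProjection_mem_subspace_eq_self]
  calc ∫ x, ‖K.starProjection x‖ ^ (2 * m) * Real.exp (-‖x‖ ^ 2) ∂μ
    _ = C * ((∫ y : K, ‖y‖ ^ (2 * m) * Real.exp (-‖y‖ ^ 2) ∂.addHaar) *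
          ∫ y : Kᗮ, Real.exp (-‖y‖ ^ 2) ∂.addHaar) := by
      rw [hC, ← integral_prod_mul]
      simp only [norm_sq, proj, neg_add, Real.exp_add, mul_assoc, Submodule.coe_norm]
    _ = (finrank ℂ K).ascFactorial m * (C * ((∫ y : K, Real.exp (-‖y‖ ^ 2) ∂.addHaar) *
          ∫ y : Kᗮ, Real.exp (-‖y‖ ^ 2) ∂.addHaar)) := by
      rw [integral_norm_pow_mul_exp_neg_norm_sq]
      ring
    _ = _ := by
      rw [hC, ← integral_prod_mul]
      simp only [norm_sq, neg_add, Real.exp_add]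

theorem integral_sphereMeasure_norm_starProjection_pow [Nontrivial E] (K : Submodule ℂ E) (m : ℕ) :
    ∫ x : sphere (0 : E) 1, ‖K.starProjection x‖ ^ (2 * m) ∂sphereMeasure μ =
      (finrank ℂ K).ascFactorial m / (finrank ℂ E).ascFactorial m := by
  have : FiniteDimensional ℝ E := .complexToReal E
  have polar := integral_eq_integral_norm_smul_integral_sphereMeasure μ
    (f := fun x ↦ ‖K.starProjection x‖ ^ (2 * m) * Real.exp (-‖x‖ ^ 2))
    (g := fun x ↦ ‖K.starProjection x‖ ^ (2 * m))
    (h := fun r ↦ r ^ (2 * m) * Real.exp (-r ^ 2)) fun r hr x hx ↦ by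
      rw [ContinuousLinearMap.map_smul_of_tower, norm_smul, norm_smul,
        mem_sphere_zero_iff_norm.1 hx, Real.norm_of_nonneg hr.le, mul_one, smul_eq_mul, mul_pow]
      ring
  have ascFactorial_pos : 0 < (finrank ℂ E).ascFactorial m := by
    rw [← Nat.sub_add_cancel (finrank_pos (R := ℂ) (M := E))]
    exact Nat.ascFactorial_pos _ m
  rw [integral_norm_starProjection_pow_mul_exp_neg_norm_sq, integral_norm_pow_mul_exp_neg_norm_sq,
    smul_eq_mul] at polar
  rw [eq_div_iff (by positivity)]
  refine mul_left_cancel₀ (integral_exp_neg_norm_sq_pos μ).ne' ?_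
  linear_combination -polar

theorem integral_sphereMeasure_norm_inner_pow [Nontrivial E] {e : E} (he : ‖e‖ = 1) (m : ℕ) :
    ∫ x : sphere (0 : E) 1, ‖inner ℂ e (x : E)‖ ^ (2 * m) ∂sphereMeasure μ =
      ((m + (finrank ℂ E - 1)).choose (finrank ℂ E - 1) : ℝ)⁻¹ := by
  have e_ne_zero : e ≠ 0 := norm_ne_zero_iff.1 (he ▸ one_ne_zero)
  have moment := integral_sphereMeasure_norm_starProjection_pow μ (ℂ ∙ e) m
  have ascFactorial_finrank : (finrank ℂ E).ascFactorial m =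
      m.factorial * (m + (finrank ℂ E - 1)).choose (finrank ℂ E - 1) := by
    rw [← Nat.choose_symm_add, add_comm m, ← Nat.ascFactorial_eq_factorial_mul_choose,
      Nat.sub_add_cancel finrank_pos]
  simp only [Submodule.starProjection_unit_singleton ℂ he, norm_smul, he, mul_one,
    finrank_span_singleton e_ne_zero, Nat.one_ascFactorial, ascFactorial_finrank] at moment
  rw [moment]
  push_cast
  field_simp

end GaussianMoments

section SzegoKernel

theorem hasSum_choose_mul_integral_mul_pow {X : Type*} [MeasurableSpace X] {ν : Measure X}
    {f g : X → ℂ} (hf : Integrable f ν) (hg : AEStronglyMeasurable g ν) {r : ℝ} (hr : r < 1)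
    (hgr : ∀ x, ‖g x‖ ≤ r) (k : ℕ) :
    HasSum (fun m ↦ ((m + k).choose k : ℂ) * ∫ x, f x * g x ^ m ∂ν)
      (∫ x, f x * ((1 - g x) ^ (k + 1))⁻¹ ∂ν) := by
  simp only [← integral_const_mul]
  refine hasSum_integral_of_dominated_convergence
    (fun m x ↦ ‖f x‖ * ((m + k).choose k * r ^ m)) (fun m ↦ ?_)
    (fun m ↦ .of_forall fun x ↦ ?_) (.of_forall fun x ↦ ?_) ?_ (.of_forall fun x ↦ ?_)
  · exact (hf.aestronglyMeasurable.mul (hg.pow m)).const_mul _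
  · rw [norm_mul, norm_mul, norm_pow, RCLike.norm_natCast, mul_left_comm]
    gcongr
    exact hgr x
  · have norm_r_lt : ‖r‖ < 1 := by
      rwa [Real.norm_of_nonneg ((norm_nonneg (g x)).trans (hgr x))]
    exact (summable_choose_mul_geometric_of_norm_lt_one k norm_r_lt).mul_left _
  · simp only [tsum_mul_left]
    exact hf.norm.mul_const _
  · simpa only [one_div, mul_left_comm] using
      (hasSum_choose_mul_geometric_of_norm_lt_one k ((hgr x).trans_lt hr)).mul_left (f x)

theorem exists_norm_eq_one_and_norm_smul_eq (𝕜 : Type*) {V : Type*} [RCLike 𝕜]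
    [NormedAddCommGroup V] [NormedSpace 𝕜 V] [Nontrivial V] (x : V) :
    ∃ e : V, ‖e‖ = 1 ∧ (‖x‖ : 𝕜) • e = x := by
  rcases eq_or_ne x 0 with rfl | hx
  · obtain ⟨y, hy⟩ := exists_ne (0 : V)
    exact ⟨(‖y‖ : 𝕜)⁻¹ • y, norm_smul_inv_norm hy, by simp⟩
  · exact ⟨(‖x‖ : 𝕜)⁻¹ • x, norm_smul_inv_norm hx, by simp [hx]⟩

variable {E : Type*} [NormedAddCommGroup E] [InnerProductSpace ℂ E]

/-- The Szegő kernel `(1 - ⟨z, w⟩) ^ (-d)` of the unit ball of a `d`-dimensional space. The paper's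
`⟨z, w⟩`, linear in `z`, is `inner ℂ w z`. -/
noncomputable def szegoKernel (z w : E) : ℂ := ((1 - inner ℂ w z) ^ finrank ℂ E)⁻¹

theorem conj_szegoKernel (z w : E) : conj (szegoKernel z w) = szegoKernel w z := by
  simp [szegoKernel]

theorem differentiableOn_szegoKernel_left {w : E} (hw : w ∈ ball 0 1) :
    DifferentiableOn ℂ (szegoKernel · w) (closedBall 0 1) := by
  refine .fun_inv (((innerSL ℂ w).differentiable.const_sub 1).pow _).differentiableOn
    fun z hz ↦ pow_ne_zero _ fun h ↦ ?_
  rw [mem_ball_zero_iff] at hw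
  rw [mem_closedBall_zero_iff] at hz
  have norm_inner_lt : ‖inner ℂ w z‖ < 1 :=
    (norm_inner_le_norm w z).trans_lt (mul_lt_one_of_nonneg_of_lt_one_left (norm_nonneg w) hw hz)
  rw [← sub_eq_zero.1 h, norm_one] at norm_inner_lt
  exact lt_irrefl _ norm_inner_lt

variable [FiniteDimensional ℂ E] [Nontrivial E] [MeasurableSpace E] [BorelSpace E]
  (μ : Measure E) [μ.IsAddHaarMeasure]

theorem choose_mul_integral_sphereMeasure_mul_inner_smul_pow {e : E} (he : ‖e‖ = 1) (a : ℂ)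
    {f : E → ℂ} (hf : DifferentiableOn ℂ f (closedBall 0 1)) (m : ℕ) :
    ((m + (finrank ℂ E - 1)).choose (finrank ℂ E - 1) : ℂ) *
      ∫ x : sphere (0 : E) 1, f x * inner ℂ (x : E) (a • e) ^ m ∂sphereMeasure μ =
        a ^ m * (iteratedDeriv m (fun b : ℂ ↦ f (b • e)) 0 / m.factorial) := by
  have choose_ne_zero : ((m + (finrank ℂ E - 1)).choose (finrank ℂ E - 1) : ℂ) ≠ 0 := by
    exact_mod_cast (Nat.choose_pos (Nat.le_add_left _ _)).ne'
  simp only [inner_smul_right, mul_pow, mul_left_comm _ (a ^ m), integral_const_mul]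
  rw [integral_sphereMeasure_mul_inner_pow μ he hf, integral_sphereMeasure_norm_inner_pow μ he]
  push_cast
  field_simp

theorem integral_sphereMeasure_mul_szegoKernel {f : E → ℂ}
    (hf : DifferentiableOn ℂ f (closedBall 0 1)) {z : E} (hz : z ∈ ball 0 1) :
    ∫ x : sphere (0 : E) 1, f x * szegoKernel z x ∂sphereMeasure μ = f z := by
  have : FiniteDimensional ℝ E := .complexToReal E
  obtain ⟨e, he, hez⟩ : ∃ e : E, ‖e‖ = 1 ∧ (‖z‖ : ℂ) • e = z :=
    exists_norm_eq_one_and_norm_smul_eq ℂ z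
  rw [mem_ball_zero_iff] at hz
  have integrable : Integrable (fun x : sphere (0 : E) 1 ↦ f x) (sphereMeasure μ) :=
    (hf.continuousOn.mono sphere_subset_closedBall).domRestrict.integrable_of_hasCompactSupport
      (HasCompactSupport.of_compactSpace _)
  have measurable : AEStronglyMeasurable (fun x : sphere (0 : E) 1 ↦ inner ℂ (x : E) z)
      (sphereMeasure μ) := by
    fun_prop
  have norm_inner_le (x : sphere (0 : E) 1) : ‖inner ℂ (x : E) z‖ ≤ ‖z‖ := by
    simpa [norm_eq_of_mem_sphere x] using norm_inner_le_norm (𝕜 := ℂ) (x : E) z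
  have expansion :=
    hasSum_choose_mul_integral_mul_pow integrable measurable hz norm_inner_le (finrank ℂ E - 1)
  rw [Nat.sub_add_cancel finrank_pos] at expansion
  have slice_differentiableOn : DifferentiableOn ℂ (fun a : ℂ ↦ f (a • e)) (ball 0 1) :=
    hf.comp (by fun_prop) fun a ha ↦ by
      simpa [norm_smul, he] using (mem_ball_zero_iff.1 ha).le
  have taylor := hasSum_taylorSeries_on_ball slice_differentiableOn (z := ‖z‖) (by simpa using hz)
  rw [hez] at taylor
  refine expansion.unique (taylor.congr_fun fun m ↦ ?_)
  have coefficient := choose_mul_integral_sphereMeasure_mul_inner_smul_pow μ he ‖z‖ hf m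
  rw [hez] at coefficient
  rw [coefficient, sub_zero, smul_eq_mul, smul_eq_mul]
  ring

end SzegoKernel

section Pick

theorem norm_toLp_mul_le {X : Type*} [TopologicalSpace X] [CompactSpace X] [MeasurableSpace X]
    [BorelSpace X] (ν : Measure X) [IsFiniteMeasure ν] {f : C(X, ℂ)} (hf : ∀ x, ‖f x‖ ≤ 1)
    (g : C(X, ℂ)) : ‖(f * g).toLp 2 ν ℂ‖ ≤ ‖g.toLp 2 ν ℂ‖ := by
  refine Lp.norm_le_norm_of_ae_le ?_
  filter_upwards [(f * g).coeFn_toLp (p := 2) (𝕜 := ℂ) ν, g.coeFn_toLp (p := 2) (𝕜 := ℂ) ν]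
    with x hfg hg
  rw [hfg, hg, ContinuousMap.mul_apply, norm_mul]
  exact mul_le_of_le_one_left (norm_nonneg _) (hf x)

variable {E ι : Type*} [NormedAddCommGroup E] [InnerProductSpace ℂ E] [FiniteDimensional ℂ E]
  [Nontrivial E] [Fintype ι]

theorem pick_szegoKernel_nonneg_of_differentiableOn_closedBall {φ : E → ℂ}
    (hφ : DifferentiableOn ℂ φ (closedBall 0 1)) (hφ_le : ∀ x ∈ sphere 0 1, ‖φ x‖ ≤ 1)
    {z : ι → E} (hz : ∀ i, z i ∈ ball 0 1) (c : ι → ℂ) :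
    0 ≤ ∑ i, ∑ j, (1 - φ (z i) * conj (φ (z j))) * szegoKernel (z i) (z j) * c i * conj (c j) := by
  have : FiniteDimensional ℝ E := .complexToReal E
  borelize E
  let σ := sphereMeasure (Measure.addHaar : Measure E)
  have kernel_differentiableOn (i : ι) := differentiableOn_szegoKernel_left (hz i)
  let Φ : C(sphere (0 : E) 1, ℂ) :=
    ⟨fun x ↦ φ x, (hφ.continuousOn.mono sphere_subset_closedBall).domRestrict⟩
  let k (i : ι) : C(sphere (0 : E) 1, ℂ) :=
    ⟨fun x ↦ szegoKernel (x : E) (z i),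
      ((kernel_differentiableOn i).continuousOn.mono sphere_subset_closedBall).domRestrict⟩
  have reproducing (i : ι) (F : C(sphere (0 : E) 1, ℂ)) {f : E → ℂ}
      (hf : DifferentiableOn ℂ f (closedBall 0 1)) (hF : ∀ x, F x = f x) :
      inner ℂ ((k i).toLp 2 σ ℂ) (F.toLp 2 σ ℂ) = f (z i) := by
    rw [ContinuousMap.inner_toLp, ← integral_sphereMeasure_mul_szegoKernel .addHaar hf (hz i)]
    congr with x
    rw [hF, ← conj_szegoKernel]
    rfl
  have inner_kernel (i j : ι) :
      inner ℂ ((k i).toLp 2 σ ℂ) ((k j).toLp 2 σ ℂ) = szegoKernel (z i) (z j) :=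
    reproducing i (k j) (kernel_differentiableOn j) fun _ ↦ rfl
  have inner_mul_kernel (i j : ι) : inner ℂ ((k i).toLp 2 σ ℂ) ((Φ * k j).toLp 2 σ ℂ) =
      φ (z i) * inner ℂ ((k i).toLp 2 σ ℂ) ((k j).toLp 2 σ ℂ) := by
    rw [inner_kernel]
    exact reproducing i (Φ * k j) (hφ.mul (kernel_differentiableOn j)) fun _ ↦ rfl
  have contraction (a : ι → ℂ) :
      ‖∑ i, a i • (Φ * k i).toLp 2 σ ℂ‖ ≤ ‖∑ i, a i • (k i).toLp 2 σ ℂ‖ := by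
    simp only [← map_smul, ← map_sum, ← mul_smul_comm, ← Finset.mul_sum]
    exact norm_toLp_mul_le σ (fun x ↦ hφ_le x x.2) _
  simpa only [inner_kernel] using sum_one_sub_mul_inner_nonneg contraction inner_mul_kernel c

theorem pick_szegoKernel_nonneg {φ : E → ℂ} (hφ : DifferentiableOn ℂ φ (ball 0 1))
    (hφ_le : ∀ x ∈ ball 0 1, ‖φ x‖ ≤ 1) {z : ι → E} (hz : ∀ i, z i ∈ ball 0 1) (c : ι → ℂ) :
    0 ≤ ∑ i, ∑ j, (1 - φ (z i) * conj (φ (z j))) * szegoKernel (z i) (z j) * c i * conj (c j) := by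
  have dilated_nonneg (r : ℝ) (hr : r ∈ Ioo (0 : ℝ) 1) :
      0 ≤ ∑ i, ∑ j, (1 - φ (r • z i) * conj (φ (r • z j))) *
        szegoKernel (z i) (z j) * c i * conj (c j) := by
    have mapsTo : MapsTo (fun x : E ↦ r • x) (closedBall 0 1) (ball 0 1) := fun x hx ↦ by
      rw [mem_closedBall_zero_iff] at hx
      rw [mem_ball_zero_iff, norm_smul, Real.norm_of_nonneg hr.1.le]
      exact mul_lt_one_of_nonneg_of_lt_one_left hr.1.le hr.2 hx
    exact pick_szegoKernel_nonneg_of_differentiableOn_closedBall (φ := fun x ↦ φ (r • x))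
      (hφ.comp (by fun_prop) mapsTo)
      (fun x hx ↦ hφ_le _ (mapsTo (sphere_subset_closedBall hx))) hz c
  have tendsto_dilation (i : ι) : Tendsto (fun r : ℝ ↦ φ (r • z i)) (𝓝[<] 1) (𝓝 (φ (z i))) := by
    have continuousAt : ContinuousAt φ ((1 : ℝ) • z i) := by
      rw [one_smul]
      exact (hφ.differentiableAt (isOpen_ball.mem_nhds (hz i))).continuousAt
    have : ContinuousAt (fun r : ℝ ↦ φ (r • z i)) 1 :=
      continuousAt.comp (f := fun r : ℝ ↦ r • z i) (by fun_prop)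
    simpa using this.tendsto.mono_left nhdsWithin_le_nhds
  refine ge_of_tendsto (tendsto_finsetSum _ fun i _ ↦ tendsto_finsetSum _ fun j _ ↦ ?_)
    (mem_of_superset (Ioo_mem_nhdsLT one_pos) dilated_nonneg)
  exact (((tendsto_const_nhds.sub ((tendsto_dilation i).mul
    ((continuous_conj.tendsto _).comp (tendsto_dilation j)))).mul_const _).mul_const _).mul_const _

end Pick

theorem toLp_mem_ball_iff {d : ℕ} {z : Fin d → ℂ} : WithLp.toLp 2 z ∈ ball 0 1 ↔ z ∈ EucBall d := by
  rw [mem_ball_zero_iff, ← sq_lt_one_iff₀ (norm_nonneg _), EuclideanSpace.norm_sq_eq]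
  rfl

theorem szegoKernel_toLp {d : ℕ} (z w : Fin d → ℂ) :
    szegoKernel (WithLp.toLp 2 z) (WithLp.toLp 2 w) = ((1 - ∑ k, z k * conj (w k)) ^ d)⁻¹ := by
  rw [szegoKernel, finrank_euclideanSpace_fin, PiLp.inner_apply]
  rfl

/-- The necessity direction of Theorem 1.1 of the paper for `Ω = 𝔹_d` with `ν = θ`:
if a contractive analytic function on the ball interpolates the data, then the Pick matrix
associated to the Szegő kernel `(1 - ⟨z, w⟩)^{-d}` of `H²(𝔹_d)` is positive semidefinite. -/
theorem pick_necessity_szego_ball (d n : ℕ) (hd : 1 ≤ d)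
    (z : Fin n → Fin d → ℂ) (hz : ∀ i, z i ∈ EucBall d) (w : Fin n → ℂ)
    (φ : (Fin d → ℂ) → ℂ) (hφa : AnalyticOnNhd ℂ φ (EucBall d))
    (hφb : ∀ ζ ∈ EucBall d, ‖φ ζ‖ ≤ 1) (hφi : ∀ i, φ (z i) = w i) :
    ∀ c : Fin n → ℂ,
      0 ≤ ∑ i, ∑ j, (1 - w i * conj (w j)) *
        ((1 - ∑ k, z i k * conj (z j k)) ^ d)⁻¹ * c i * conj (c j) := by
  intro c
  have : NeZero d := ⟨Nat.one_le_iff_ne_zero.1 hd⟩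
  let φ' (x : EuclideanSpace ℂ (Fin d)) : ℂ := φ x.ofLp
  have mapsTo : MapsTo WithLp.ofLp (ball (0 : EuclideanSpace ℂ (Fin d)) 1) (EucBall d) :=
    fun x hx ↦ toLp_mem_ball_iff.1 hx
  have differentiableOn : DifferentiableOn ℂ φ' (ball 0 1) :=
    hφa.differentiableOn.comp (by fun_prop) mapsTo
  simpa only [φ', szegoKernel_toLp, hφi] using pick_szegoKernel_nonneg differentiableOn
    (fun x hx ↦ hφb _ (mapsTo hx)) (fun i ↦ toLp_mem_ball_iff.2 (hz i)) c
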